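/- (Theorem 2.1(e)) Let G ⊆ [0,∞) be a Borel set and β ∈ (0, d). Assume the Khoshnevisan–Xiao equivalence holds for X, i.e., C_β(X(G)) = 0 P-almost surely if and only if for every μ ∈ P(G), ∫_{ℝ^d} [∫∫_{G×G} Re χ_ξ(t−s) μ(dt) μ(ds)] ‖ξ‖^{β−d} dξ = +∞ (here X(G) = {X_t(ω) : t ∈ G} is the random image set and C_β is the capacity on Borel subsets of ℝ^d with kernel z ↦ ‖z‖^{−β}). If C_{g_{d−β,+}}(G) = 0 and for every μ ∈ P(G), ∫_{ℝ^d} [∫∫_{G×G} max(−Re χ_ξ(t−s), 0) μ(dt) μ(ds)] ‖ξ‖^{β−d} dξ < +∞, then C_β(X(G)) = 0 P-almost surely. -/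

import Mathlib

/-! Since `Re χ = (Re χ)₊ - (Re χ)₋`, one has `E_{(Re χ_ξ)₊}(μ) = E_{Re χ_ξ}(μ) + E_{(Re χ_ξ)₋}(μ)`,
the energies being finite because `Re Ψ ≥ 0` (`exp (-Ψ)` is a characteristic function).
Integrating against `‖ξ‖^{β-d} dξ` and applying Tonelli's theorem on the left bounds the
`g_{d-β,+}`-energy of `μ` by its Khoshnevisan–Xiao integral plus the integral of the negative parts.
Zero capacity makes this energy infinite for every `μ`, hence the Khoshnevisan–Xiao integral too,
as the negative parts contribute only a finite amount. -/

open MeasureTheory Complex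
open scoped RealInnerProductSpace ENNReal

noncomputable section

/-- `χ_ξ(x) = exp(−|x| Ψ(sign(x) ξ))`. -/
def chi {d : ℕ} (Ψ : EuclideanSpace ℝ (Fin d) → ℂ) (ξ : EuclideanSpace ℝ (Fin d)) (x : ℝ) : ℂ :=
  Complex.exp (((-|x| : ℝ) : ℂ) * Ψ (Real.sign x • ξ))

/-- `g_{γ,+}(x) = ∫_{ℝ^d} (Re χ_ξ(x))_+ ‖ξ‖^{−γ} dξ`, with values in `[0,∞]`. -/
def gplus {d : ℕ} (Ψ : EuclideanSpace ℝ (Fin d) → ℂ) (γ : ℝ) (x : ℝ) : ℝ≥0∞ :=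
  ∫⁻ ξ : EuclideanSpace ℝ (Fin d),
    ENNReal.ofReal (max ((chi Ψ ξ x).re) 0) * (ENNReal.ofReal ‖ξ‖) ^ (-γ) ∂volume

/-- `g_{γ,−}(x) = ∫_{ℝ^d} (Re χ_ξ(x))_− ‖ξ‖^{−γ} dξ`, with values in `[0,∞]`. -/
def gminus {d : ℕ} (Ψ : EuclideanSpace ℝ (Fin d) → ℂ) (γ : ℝ) (x : ℝ) : ℝ≥0∞ :=
  ∫⁻ ξ : EuclideanSpace ℝ (Fin d),
    ENNReal.ofReal (max (-(chi Ψ ξ x).re) 0) * (ENNReal.ofReal ‖ξ‖) ^ (-γ) ∂volume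

/-- The `f`-energy `E_f(μ) = ∫∫_{G×G} f(t−s) μ(dt)μ(ds)` of a measure on `ℝ`,
for a `[0,∞]`-valued kernel `f`. -/
def energyR (f : ℝ → ℝ≥0∞) (G : Set ℝ) (μ : Measure ℝ) : ℝ≥0∞ :=
  ∫⁻ t in G, ∫⁻ s in G, f (t - s) ∂μ ∂μ

/-- The `f`-capacity `C_f(G) = [inf_{μ ∈ P(G)} E_f(μ)]⁻¹` (with `1/∞ = 0`), the infimum
being over Borel probability measures supported in `G`. -/
def capacityR (f : ℝ → ℝ≥0∞) (G : Set ℝ) : ℝ≥0∞ :=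
  (⨅ (μ : Measure ℝ) (_ : IsProbabilityMeasure μ ∧ μ Gᶜ = 0), energyR f G μ)⁻¹

/-- The Bessel–Riesz capacity `C_β(B) = [inf_ν ∫∫_{B×B} ‖x−y‖^{−β} ν(dx)ν(dy)]⁻¹` on Borel
subsets of `ℝ^d`, the infimum over Borel probability measures supported in `B`. -/
def capacityBeta {d : ℕ} (β : ℝ) (B : Set (EuclideanSpace ℝ (Fin d))) : ℝ≥0∞ :=
  (⨅ (ν : Measure (EuclideanSpace ℝ (Fin d))) (_ : IsProbabilityMeasure ν ∧ ν Bᶜ = 0),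
    ∫⁻ x in B, ∫⁻ y in B, (ENNReal.ofReal ‖x - y‖) ^ (-β) ∂ν ∂ν)⁻¹

theorem lintegral_ofReal_le_ofReal_integral_add {α : Type*} [MeasurableSpace α] {m : Measure α}
    {f : α → ℝ} (hf : Integrable f m) :
    ∫⁻ x, ENNReal.ofReal (f x) ∂m ≤
      ENNReal.ofReal (∫ x, f x ∂m) + ∫⁻ x, ENNReal.ofReal (-f x) ∂m := by
  have hpos : ∫⁻ x, ENNReal.ofReal (f x) ∂m ≠ ∞ := hf.lintegral_lt_top.ne
  have hneg : ∫⁻ x, ENNReal.ofReal (-f x) ∂m ≠ ∞ := hf.neg.lintegral_lt_top.ne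
  rw [integral_eq_lintegral_pos_part_sub_lintegral_neg_part hf,
    ENNReal.ofReal_sub _ ENNReal.toReal_nonneg, ENNReal.ofReal_toReal hpos,
    ENNReal.ofReal_toReal hneg]
  exact le_tsub_add

section Energy

theorem energyR_eq_top_of_capacityR_eq_zero {f : ℝ → ℝ≥0∞} {G : Set ℝ}
    (hf : capacityR f G = 0) {μ : Measure ℝ} (hμ : IsProbabilityMeasure μ) (hμG : μ Gᶜ = 0) :
    energyR f G μ = ∞ := by
  simp only [capacityR, ENNReal.inv_eq_zero, iInf_eq_top] at hf
  exact hf μ ⟨hμ, hμG⟩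

variable {E : Type*} [MeasurableSpace E] {G : Set ℝ} {μ : Measure ℝ} [SFinite μ]

theorem energyR_eq_lintegral_prod {f : ℝ → ℝ≥0∞} (hf : Measurable f) :
    energyR f G μ = ∫⁻ p, f (p.1 - p.2) ∂(μ.restrict G).prod (μ.restrict G) :=
  (lintegral_prod (fun p : ℝ × ℝ ↦ f (p.1 - p.2)) (by fun_prop)).symm

theorem energyR_mul_const {f : ℝ → ℝ≥0∞} (hf : Measurable f) (c : ℝ≥0∞) :
    energyR (fun x ↦ f x * c) G μ = energyR f G μ * c := by
  rw [energyR_eq_lintegral_prod hf, energyR_eq_lintegral_prod (hf.mul_const c)]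
  exact lintegral_mul_const c (by fun_prop)

theorem measurable_energyR {f : E → ℝ → ℝ≥0∞} (hf : Measurable f.uncurry) :
    Measurable fun ξ ↦ energyR (f ξ) G μ := by
  simp_rw [fun ξ ↦ energyR_eq_lintegral_prod (G := G) (μ := μ) (hf.of_uncurry_left (x := ξ))]
  have hsub : Measurable fun q : E × ℝ × ℝ ↦ f q.1 (q.2.1 - q.2.2) :=
    hf.comp (measurable_fst.prodMk (by fun_prop))
  exact hsub.lintegral_prod_right'

theorem energyR_lintegral {f : E → ℝ → ℝ≥0∞} (hf : Measurable f.uncurry)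
    (ν : Measure E) [SFinite ν] :
    energyR (fun x ↦ ∫⁻ ξ, f ξ x ∂ν) G μ = ∫⁻ ξ, energyR (f ξ) G μ ∂ν := by
  have hsub : Measurable fun q : (ℝ × ℝ) × E ↦ f q.2 (q.1.1 - q.1.2) :=
    hf.comp (measurable_snd.prodMk (by fun_prop))
  have hlint : Measurable fun x ↦ ∫⁻ ξ, f ξ x ∂ν := hf.lintegral_prod_left'
  rw [energyR_eq_lintegral_prod hlint, lintegral_lintegral_swap hsub.aemeasurable]
  simp_rw [fun ξ ↦ energyR_eq_lintegral_prod (G := G) (μ := μ) (hf.of_uncurry_left (x := ξ))]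

theorem energyR_ofReal_le {k : ℝ → ℝ} (hk : Measurable k)
    (hk_int : Integrable (fun p : ℝ × ℝ ↦ k (p.1 - p.2)) ((μ.restrict G).prod (μ.restrict G))) :
    energyR (fun x ↦ ENNReal.ofReal (k x)) G μ ≤
      ENNReal.ofReal (∫ t in G, ∫ s in G, k (t - s) ∂μ ∂μ) +
        energyR (fun x ↦ ENNReal.ofReal (-k x)) G μ := by
  rw [energyR_eq_lintegral_prod (by fun_prop), energyR_eq_lintegral_prod (by fun_prop),
    integral_integral hk_int]
  exact lintegral_ofReal_le_ofReal_integral_add hk_int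

theorem energyR_lintegral_ofReal_mul_le {k : E → ℝ → ℝ} (hk : Measurable k.uncurry)
    (hk_int : ∀ ξ, Integrable (fun p : ℝ × ℝ ↦ k ξ (p.1 - p.2))
      ((μ.restrict G).prod (μ.restrict G)))
    {w : E → ℝ≥0∞} (hw : Measurable w) (ν : Measure E) [SFinite ν] :
    energyR (fun x ↦ ∫⁻ ξ, ENNReal.ofReal (k ξ x) * w ξ ∂ν) G μ ≤
      ∫⁻ ξ, ENNReal.ofReal (∫ t in G, ∫ s in G, k ξ (t - s) ∂μ ∂μ) * w ξ ∂ν +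
        ∫⁻ ξ, energyR (fun x ↦ ENNReal.ofReal (-k ξ x)) G μ * w ξ ∂ν := by
  have hksec (ξ : E) : Measurable (k ξ) := hk.of_uncurry_left
  have hneg : Measurable fun ξ ↦ energyR (fun x ↦ ENNReal.ofReal (-k ξ x)) G μ * w ξ :=
    (measurable_energyR hk.neg.ennreal_ofReal).mul hw
  calc energyR (fun x ↦ ∫⁻ ξ, ENNReal.ofReal (k ξ x) * w ξ ∂ν) G μ
      = ∫⁻ ξ, energyR (fun x ↦ ENNReal.ofReal (k ξ x) * w ξ) G μ ∂ν :=
        energyR_lintegral (hk.ennreal_ofReal.mul (hw.comp measurable_fst)) ν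
    _ = ∫⁻ ξ, energyR (fun x ↦ ENNReal.ofReal (k ξ x)) G μ * w ξ ∂ν :=
        lintegral_congr fun ξ ↦ energyR_mul_const (hksec ξ).ennreal_ofReal (w ξ)
    _ ≤ ∫⁻ ξ, (ENNReal.ofReal (∫ t in G, ∫ s in G, k ξ (t - s) ∂μ ∂μ) +
          energyR (fun x ↦ ENNReal.ofReal (-k ξ x)) G μ) * w ξ ∂ν := by
        gcongr with ξ
        exact energyR_ofReal_le (hksec ξ) (hk_int ξ)
    _ = _ := by
        simp only [add_mul]
        exact lintegral_add_right _ hneg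

end Energy

theorem re_nonneg_of_integral_exp_eq_exp_neg {Ω : Type*} [MeasurableSpace Ω] {P : Measure Ω}
    [IsProbabilityMeasure P] {Y : Ω → ℝ} {z : ℂ}
    (h : ∫ ω, exp (Y ω * I) ∂P = exp (-z)) : 0 ≤ z.re := by
  have hnorm : ‖∫ ω, exp (Y ω * I) ∂P‖ ≤ 1 := by
    simpa using norm_integral_le_of_norm_le_const (μ := P) (C := 1)
      (.of_forall fun ω ↦ (norm_exp_ofReal_mul_I (Y ω)).le)
  rw [h, norm_exp, neg_re, Real.exp_le_one_iff] at hnorm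
  exact neg_nonpos.mp hnorm

section Chi

variable {d : ℕ} {Ψ : EuclideanSpace ℝ (Fin d) → ℂ}

theorem abs_re_chi_le_one (hΨre : ∀ ξ, 0 ≤ (Ψ ξ).re) (ξ : EuclideanSpace ℝ (Fin d)) (x : ℝ) :
    |(chi Ψ ξ x).re| ≤ 1 := by
  refine (abs_re_le_norm _).trans ?_
  rw [chi, norm_exp, re_ofReal_mul, Real.exp_le_one_iff]
  exact mul_nonpos_of_nonpos_of_nonneg (neg_nonpos.mpr (abs_nonneg x)) (hΨre _)

theorem measurable_real_sign : Measurable Real.sign :=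
  Measurable.ite measurableSet_Iio measurable_const
    (Measurable.ite measurableSet_Ioi measurable_const measurable_const)

theorem measurable_chi (hΨ : Measurable Ψ) : Measurable (chi Ψ).uncurry := by
  have hsign : Measurable fun p : EuclideanSpace ℝ (Fin d) × ℝ ↦ Real.sign p.2 • p.1 :=
    (measurable_real_sign.comp measurable_snd).smul measurable_fst
  have habs : Measurable fun p : EuclideanSpace ℝ (Fin d) × ℝ ↦ ((-|p.2| : ℝ) : ℂ) := by fun_prop
  exact (habs.mul (hΨ.comp hsign)).cexp

theorem energyR_gplus_le (hΨ : Measurable Ψ) (hΨre : ∀ ξ, 0 ≤ (Ψ ξ).re) (γ : ℝ) (G : Set ℝ)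
    (μ : Measure ℝ) [IsFiniteMeasure μ] :
    energyR (gplus Ψ γ) G μ ≤
      (∫⁻ ξ, ENNReal.ofReal (∫ t in G, ∫ s in G, (chi Ψ ξ (t - s)).re ∂μ ∂μ) *
          ENNReal.ofReal ‖ξ‖ ^ (-γ)) +
        ∫⁻ ξ, energyR (fun x ↦ ENNReal.ofReal (max (-(chi Ψ ξ x).re) 0)) G μ *
          ENNReal.ofReal ‖ξ‖ ^ (-γ) := by
  have hre : Measurable (fun ξ x ↦ (chi Ψ ξ x).re).uncurry := (measurable_chi hΨ).re
  have hre_int (ξ : EuclideanSpace ℝ (Fin d)) :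
      Integrable (fun p : ℝ × ℝ ↦ (chi Ψ ξ (p.1 - p.2)).re)
        ((μ.restrict G).prod (μ.restrict G)) :=
    have hsec : Measurable fun x ↦ (chi Ψ ξ x).re := hre.of_uncurry_left
    .of_bound (hsec.comp measurable_sub).aestronglyMeasurable 1
      (.of_forall fun _ ↦ abs_re_chi_le_one hΨre ξ _)
  unfold gplus
  simp only [ENNReal.ofReal_max, ENNReal.ofReal_zero, max_zero]
  exact energyR_lintegral_ofReal_mul_le hre hre_int (by fun_prop) volume

end Chi

theorem stmt10_general {d : ℕ} (Ψ : EuclideanSpace ℝ (Fin d) → ℂ) (hΨ : Measurable Ψ)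
    {Ω : Type*} [MeasurableSpace Ω] (P : Measure Ω) [IsProbabilityMeasure P]
    (X : ℝ → Ω → EuclideanSpace ℝ (Fin d))
    (hX : ∀ s t : ℝ, 0 ≤ s → s ≤ t → ∀ ξ : EuclideanSpace ℝ (Fin d),
      ∫ ω, Complex.exp ((⟪ξ, X t ω - X s ω⟫ : ℂ) * Complex.I) ∂P
        = Complex.exp (((-(t - s) : ℝ) : ℂ) * Ψ ξ))
    (G : Set ℝ) (β : ℝ)
    (hKX : (∀ μ : Measure ℝ, IsProbabilityMeasure μ → μ Gᶜ = 0 →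
        ∫⁻ ξ : EuclideanSpace ℝ (Fin d),
          ENNReal.ofReal (∫ t in G, ∫ s in G, (chi Ψ ξ (t - s)).re ∂μ ∂μ)
            * (ENNReal.ofReal ‖ξ‖) ^ (β - d) ∂volume = ⊤) →
      ∀ᵐ ω ∂P, capacityBeta β ((fun t => X t ω) '' G) = 0)
    (hcap0 : capacityR (gplus Ψ ((d : ℝ) - β)) G = 0)
    (hminus : ∀ μ : Measure ℝ, IsProbabilityMeasure μ → μ Gᶜ = 0 →
      ∫⁻ ξ : EuclideanSpace ℝ (Fin d),
        (∫⁻ t in G, ∫⁻ s in G, ENNReal.ofReal (max (-(chi Ψ ξ (t - s)).re) 0) ∂μ ∂μ)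
          * (ENNReal.ofReal ‖ξ‖) ^ (β - d) ∂volume < ⊤) :
    ∀ᵐ ω ∂P, capacityBeta β ((fun t => X t ω) '' G) = 0 := by
  have hΨre (ξ : EuclideanSpace ℝ (Fin d)) : 0 ≤ (Ψ ξ).re :=
    re_nonneg_of_integral_exp_eq_exp_neg (by simpa using hX 0 1 le_rfl zero_le_one ξ)
  refine hKX fun μ hμ hμG ↦ ?_
  have hle := energyR_gplus_le hΨ hΨre (d - β) G μ
  rw [energyR_eq_top_of_capacityR_eq_zero hcap0 hμ hμG, neg_sub] at hle
  exact (ENNReal.add_eq_top.mp (top_le_iff.mp hle)).resolve_right (hminus μ hμ hμG).ne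

/-- **Theorem 2.1(e).** Assume the Khoshnevisan–Xiao equivalence for `X`.
If `C_{g_{d−β,+}}(G) = 0` and `∫_{ℝ^d} E_{(Re χ_ξ)_−}(μ) ‖ξ‖^{β−d} dξ < ∞` for every
`μ ∈ P(G)`, then `C_β(X(G)) = 0` `P`-almost surely. -/
theorem stmt10 {d : ℕ} (hd : 1 ≤ d) (Ψ : EuclideanSpace ℝ (Fin d) → ℂ) (hΨ : Measurable Ψ)
    {Ω : Type*} [MeasurableSpace Ω] (P : Measure Ω) [IsProbabilityMeasure P]
    (X : ℝ → Ω → EuclideanSpace ℝ (Fin d))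
    (hXmeas : Measurable fun p : ℝ × Ω => X p.1 p.2)
    (hX : ∀ s t : ℝ, 0 ≤ s → s ≤ t → ∀ ξ : EuclideanSpace ℝ (Fin d),
      ∫ ω, Complex.exp ((⟪ξ, X t ω - X s ω⟫ : ℂ) * Complex.I) ∂P
        = Complex.exp (((-(t - s) : ℝ) : ℂ) * Ψ ξ))
    (G : Set ℝ) (hG : MeasurableSet G) (hG0 : G ⊆ Set.Ici 0)
    (β : ℝ) (hβ0 : 0 < β) (hβd : β < d)
    (hKX : (∀ᵐ ω ∂P, capacityBeta β ((fun t => X t ω) '' G) = 0) ↔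
      (∀ μ : Measure ℝ, IsProbabilityMeasure μ → μ Gᶜ = 0 →
        ∫⁻ ξ : EuclideanSpace ℝ (Fin d),
          ENNReal.ofReal (∫ t in G, ∫ s in G, (chi Ψ ξ (t - s)).re ∂μ ∂μ)
            * (ENNReal.ofReal ‖ξ‖) ^ (β - d) ∂volume = ⊤))
    (hcap0 : capacityR (gplus Ψ ((d : ℝ) - β)) G = 0)
    (hminus : ∀ μ : Measure ℝ, IsProbabilityMeasure μ → μ Gᶜ = 0 →
      ∫⁻ ξ : EuclideanSpace ℝ (Fin d),
        (∫⁻ t in G, ∫⁻ s in G, ENNReal.ofReal (max (-(chi Ψ ξ (t - s)).re) 0) ∂μ ∂μ)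
          * (ENNReal.ofReal ‖ξ‖) ^ (β - d) ∂volume < ⊤) :
    ∀ᵐ ω ∂P, capacityBeta β ((fun t => X t ω) '' G) = 0 :=
  stmt10_general Ψ hΨ P X hX G β hKX.mpr hcap0 hminus
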